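/- Let R = ∏_{p prime} ℤ_p, and for each n let A be a random n×n matrix over R whose entries are independent and identically distributed according to the Haar probability measure on R. Then lim_{n→∞} P(A : R^n → R^n is surjective) = 0. -/

import Mathlib

open MeasureTheory Filter

instance (p : Nat.Primes) : Fact (Nat.Prime (p : ℕ)) := ⟨p.2⟩

noncomputable instance (p : ℕ) [Fact p.Prime] : MeasurableSpace ℤ_[p] := borel _

instance (p : ℕ) [Fact p.Prime] : BorelSpace ℤ_[p] := ⟨rfl⟩

/-- The product of the rings of `p`-adic integers over all primes `p`
(isomorphic to the profinite completion of `ℤ`). -/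
abbrev Zhat : Type := ∀ p : Nat.Primes, ℤ_[(p : ℕ)]

/-!
In a compact commutative ring `R` with Haar probability measure, a finite-index ideal `I` has
measure `1 / |R ⧸ I|`, so the Chinese remainder theorem says that pairwise coprime ideals of finite
index are independent events. If the measures of distinct open maximal ideals `M i` add up to `∞`,
the second Borel–Cantelli lemma puts almost every element of `R` in some `M i`, and the units form
a null set. For the product of the `ℤ_p` the sum is `∑ 1 / p`.

A linear form `L` taking a unit value is surjective, so it pushes Haar measure forward to Haar
measure, and therefore almost every value of `L` is a non-unit. The determinant is linear in its
first row, so by Fubini it is almost surely a non-unit, and a square matrix over `R` is almost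
surely not surjective.
-/

open ProbabilityTheory
open scoped ENNReal Function

section Independence

theorem measure_addSubgroup_eq_inv_index {G : Type*} [AddGroup G] [MeasurableSpace G]
    [MeasurableAdd G] (μ : Measure G) [IsProbabilityMeasure μ] [μ.IsAddLeftInvariant]
    (H : AddSubgroup G) [H.FiniteIndex] (hH : MeasurableSet (H : Set G)) :
    μ H = (H.index : ℝ≥0∞)⁻¹ := by
  refine ENNReal.eq_inv_of_mul_eq_one_left ?_
  rw [mul_comm, H.index_mul_measure hH, measure_univ]

theorem measure_ideal_eq_inv_card_quotient {R : Type*} [Ring R] [MeasurableSpace R]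
    [MeasurableAdd R] (μ : Measure R) [IsProbabilityMeasure μ] [μ.IsAddLeftInvariant]
    (I : Ideal R) [Finite (R ⧸ I)] (hI : MeasurableSet (I : Set R)) :
    μ I = (Nat.card (R ⧸ I) : ℝ≥0∞)⁻¹ :=
  have : Finite (R ⧸ I.toAddSubgroup) := ‹Finite (R ⧸ I)›
  have : I.toAddSubgroup.FiniteIndex := AddSubgroup.finiteIndex_of_finite_quotient
  measure_addSubgroup_eq_inv_index μ I.toAddSubgroup hI

variable {R ι : Type*} [CommRing R] {I : ι → Ideal R}

/-- The Chinese remainder theorem for finitely many members of a family of coprime ideals, giving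
the index of their intersection. -/
noncomputable def quotientBiInfEquivPiQuotient (hI : Pairwise (IsCoprime on I)) (s : Finset ι) :
    (R ⧸ ⨅ i ∈ s, I i) ≃+* ∀ i : s, R ⧸ I i :=
  (Ideal.quotEquivOfEq (iInf_subtype' (p := (· ∈ s)) (f := fun i _ => I i))).trans <|
    Ideal.quotientInfRingEquivPiQuotient _ (hI.comp_of_injective Subtype.val_injective)

theorem iIndepSet_ideal [MeasurableSpace R] [MeasurableAdd R] (μ : Measure R)
    [IsProbabilityMeasure μ] [μ.IsAddLeftInvariant] [∀ i, Finite (R ⧸ I i)]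
    (hI : Pairwise (IsCoprime on I)) (hmeas : ∀ i, MeasurableSet (I i : Set R)) :
    iIndepSet (fun i => (I i : Set R)) μ := by
  refine (iIndepSet_iff_meas_biInter hmeas).2 fun s => ?_
  let e := quotientBiInfEquivPiQuotient hI s
  have : Finite (R ⧸ ⨅ i ∈ s, I i) := .of_equiv _ e.symm.toEquiv
  have hcoe : ((⨅ i ∈ s, I i : Ideal R) : Set R) = ⋂ i ∈ s, (I i : Set R) := by
    simp only [Submodule.coe_iInf]
  have hcard : Nat.card (R ⧸ ⨅ i ∈ s, I i) = ∏ i ∈ s, Nat.card (R ⧸ I i) := by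
    rw [Nat.card_congr e.toEquiv, Nat.card_pi, Finset.prod_coe_sort s fun i => Nat.card (R ⧸ I i)]
  have hpos (i : ι) : (Nat.card (R ⧸ I i) : ℝ≥0∞) ≠ 0 := Nat.cast_ne_zero.2 Nat.card_pos.ne'
  calc μ (⋂ i ∈ s, I i)
      = (Nat.card (R ⧸ ⨅ i ∈ s, I i) : ℝ≥0∞)⁻¹ := by
        rw [← hcoe, measure_ideal_eq_inv_card_quotient]
        exact hcoe ▸ s.measurableSet_biInter fun i _ => hmeas i
    _ = ∏ i ∈ s, (Nat.card (R ⧸ I i) : ℝ≥0∞)⁻¹ := by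
        rw [hcard, Nat.cast_prod, ENNReal.prod_inv_distrib fun i _ _ _ _ => .inl (hpos i)]
    _ = ∏ i ∈ s, μ (I i) :=
        Finset.prod_congr rfl fun i _ => (measure_ideal_eq_inv_card_quotient μ _ (hmeas i)).symm

theorem ae_exists_mem_of_iIndepSet {Ω : Type*} [MeasurableSpace Ω] {μ : Measure Ω} [Countable ι]
    {s : ι → Set Ω} (hmeas : ∀ i, MeasurableSet (s i)) (hs : iIndepSet s μ)
    (hsum : ∑' i, μ (s i) = ∞) : ∀ᵐ ω ∂μ, ∃ i, ω ∈ s i := by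
  have : IsProbabilityMeasure μ := hs.isProbabilityMeasure
  have : Infinite ι := by
    refine not_finite_iff_infinite.1 fun _ => ?_
    have : Fintype ι := .ofFinite ι
    rw [tsum_fintype] at hsum
    exact ENNReal.sum_ne_top.2 (fun i _ => measure_ne_top μ (s i)) hsum
  obtain ⟨_⟩ := nonempty_denumerable ι
  let e : ℕ ≃ ι := (Denumerable.eqv ι).symm
  have hlimsup : μ (limsup (s ∘ e) atTop) = 1 :=
    measure_limsup_eq_one (fun n => hmeas (e n)) (hs.precomp e.injective)
      ((e.tsum_eq fun i => μ (s i)).trans hsum)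
  filter_upwards [mem_ae_iff_prob_eq_one (.measurableSet_limsup fun n => hmeas (e n)) |>.2 hlimsup]
    with ω hω
  obtain ⟨n, hn⟩ := (mem_limsup_iff_frequently_mem.1 hω).exists
  exact ⟨e n, hn⟩

end Independence

section CompactRing

variable {R : Type*} [CommRing R] [TopologicalSpace R] [IsTopologicalRing R] [CompactSpace R]
  [MeasurableSpace R] [BorelSpace R]

theorem ae_not_isUnit_of_tsum_inv_card_quotient_eq_top {ι : Type*} [Countable ι] (μ : Measure R)
    [IsProbabilityMeasure μ] [μ.IsAddLeftInvariant] {M : ι → Ideal R} [∀ i, (M i).IsMaximal]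
    (hinj : Function.Injective M) (hopen : ∀ i, IsOpen (M i : Set R))
    (hsum : ∑' i, (Nat.card (R ⧸ M i) : ℝ≥0∞)⁻¹ = ∞) : ∀ᵐ x ∂μ, ¬IsUnit x := by
  have (i : ι) : Finite (R ⧸ M i) := (M i).toAddSubgroup.quotient_finite_of_isOpen (hopen i)
  have hmeas (i : ι) : MeasurableSet (M i : Set R) := (hopen i).measurableSet
  have hcoprime : Pairwise (IsCoprime on M) := fun _ _ hij =>
    Ideal.isCoprime_of_isMaximal (hinj.ne hij)
  have hμ : ∑' i, μ (M i) = ∞ := by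
    simpa only [measure_ideal_eq_inv_card_quotient μ _ (hmeas _)] using hsum
  filter_upwards [ae_exists_mem_of_iIndepSet hmeas (iIndepSet_ideal μ hcoprime hmeas) hμ]
    with x ⟨i, hx⟩ hunit
  exact Ideal.IsMaximal.ne_top inferInstance ((M i).eq_top_of_isUnit_mem hx hunit)

theorem ae_not_isUnit_apply {V : Type*} [AddCommGroup V] [Module R V] [TopologicalSpace V]
    [ContinuousAdd V] [MeasurableSpace V] [BorelSpace V] {μ : Measure R} [IsProbabilityMeasure μ]
    [μ.IsAddHaarMeasure] (hμ : ∀ᵐ x ∂μ, ¬IsUnit x) (ν : Measure V) [IsProbabilityMeasure ν]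
    [ν.IsAddHaarMeasure] (L : V →L[R] R) : ∀ᵐ v ∂ν, ¬IsUnit (L v) := by
  by_cases hL : ∃ v, IsUnit (L v)
  · obtain ⟨v, u, hu⟩ := hL
    have hsurj : Function.Surjective L := fun x =>
      ⟨(x * ↑u⁻¹) • v, by rw [map_smul, ← hu, smul_eq_mul, Units.inv_mul_cancel_right]⟩
    have hcont : Continuous L := L.continuous
    have : (ν.map L).IsAddHaarMeasure :=
      Measure.isAddHaarMeasure_map_of_isFiniteMeasure ν (L : V →+ R) hcont hsurj
    have : IsProbabilityMeasure (ν.map L) :=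
      Measure.isProbabilityMeasure_map hcont.measurable.aemeasurable
    have hmap : ν.map L = μ := Measure.isAddHaarMeasure_eq_of_isProbabilityMeasure _ _
    exact ae_of_ae_map hcont.measurable.aemeasurable (hmap ▸ hμ)
  · exact .of_forall (not_exists.1 hL)

theorem ae_not_isUnit_det_cons [SecondCountableTopology R] {μ : Measure R} [IsProbabilityMeasure μ]
    [μ.IsAddHaarMeasure] (hμ : ∀ᵐ x ∂μ, ¬IsUnit x) {n : ℕ} (B : Fin n → Fin (n + 1) → R) :
    ∀ᵐ v ∂Measure.pi fun _ : Fin (n + 1) => μ, ¬IsUnit (Matrix.of (Fin.cons v B)).det := by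
  let L : (Fin (n + 1) → R) →ₗ[R] R :=
    Matrix.detRowAlternating.toMultilinearMap.toLinearMap (Fin.cons 0 B) 0
  have hL (v) : L v = (Matrix.of (Fin.cons v B)).det := by
    rw [MultilinearMap.toLinearMap_apply, Fin.update_cons_zero]
    rfl
  filter_upwards [ae_not_isUnit_apply hμ (Measure.pi fun _ => μ) ⟨L, L.continuous_on_pi⟩]
    with v hv
  exact hL v ▸ hv

theorem isClosed_setOf_isUnit {S : Type*} [Monoid S] [TopologicalSpace S] [ContinuousMul S]
    [CompactSpace S] [T2Space S] : IsClosed {x : S | IsUnit x} :=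
  (isCompact_range Units.continuous_val).isClosed

variable [T2Space R] [SecondCountableTopology R]

theorem ae_not_isUnit_det {μ : Measure R} [IsProbabilityMeasure μ] [μ.IsAddHaarMeasure]
    (hμ : ∀ᵐ x ∂μ, ¬IsUnit x) (n : ℕ) :
    ∀ᵐ A ∂Measure.pi fun _ : Fin (n + 1) => Measure.pi fun _ : Fin (n + 1) => μ,
      ¬IsUnit (Matrix.of A).det := by
  let ν : Measure (Fin (n + 1) → R) := Measure.pi fun _ => μ
  have hmeas : MeasurableSet {z : (Fin (n + 1) → R) × (Fin n → Fin (n + 1) → R) |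
      ¬IsUnit (Matrix.of (Fin.cons z.1 z.2)).det} := by
    have hcont : Continuous fun z : (Fin (n + 1) → R) × (Fin n → Fin (n + 1) → R) =>
        (Matrix.of (Fin.cons z.1 z.2 : Fin (n + 1) → Fin (n + 1) → R)).det :=
      (continuous_fst.finCons continuous_snd).matrix_det
    exact (isClosed_setOf_isUnit.preimage hcont).measurableSet.compl
  have hprod : ∀ᵐ z ∂ν.prod (Measure.pi fun _ : Fin n => ν),
      ¬IsUnit (Matrix.of (Fin.cons z.1 z.2)).det := by
    refine (Measure.ae_prod_iff_ae_ae hmeas).2 ?_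
    rw [Measure.ae_ae_comm hmeas]
    exact .of_forall (ae_not_isUnit_det_cons hμ)
  let e := MeasurableEquiv.piFinSuccAbove (fun _ : Fin (n + 1) => Fin (n + 1) → R) 0
  have he : MeasurePreserving e (Measure.pi fun _ => ν) (ν.prod (Measure.pi fun _ => ν)) :=
    measurePreserving_piFinSuccAbove (fun _ => ν) 0
  filter_upwards [he.quasiMeasurePreserving.ae hprod] with A hA
  have hcons : Fin.cons (e A).1 (e A).2 = A := Fin.cons_self_tail A
  rwa [hcons] at hA

theorem stmt4_general {ι : Type*} [Countable ι] (μ : Measure R) [IsProbabilityMeasure μ]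
    [μ.IsAddHaarMeasure] {M : ι → Ideal R} [∀ i, (M i).IsMaximal] (hinj : Function.Injective M)
    (hopen : ∀ i, IsOpen (M i : Set R)) (hsum : ∑' i, (Nat.card (R ⧸ M i) : ℝ≥0∞)⁻¹ = ∞) (n : ℕ) :
    (Measure.pi fun _ : Fin (n + 1) => Measure.pi fun _ : Fin (n + 1) => μ)
      {A | Function.Surjective (Matrix.of A).mulVecLin} = 0 := by
  refine measure_mono_null (fun A hA => ?_) (ae_not_isUnit_det
    (ae_not_isUnit_of_tsum_inv_card_quotient_eq_top μ hinj hopen hsum) n)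
  have hunit : IsUnit (Matrix.of A) := Matrix.mulVec_surjective_iff_isUnit.1 hA
  exact not_not_intro ((Matrix.isUnit_iff_isUnit_det _).1 hunit)

end CompactRing

namespace Zhat

/-- Reduction modulo a prime `p`, that is, `Zhat → ℤ_p → 𝔽_p`. Its kernel is an open maximal ideal
of index `p`. -/
noncomputable def toZMod (p : Nat.Primes) : Zhat →+* ZMod p :=
  PadicInt.toZMod.comp (Pi.evalRingHom _ p)

theorem toZMod_surjective (p : Nat.Primes) : Function.Surjective (toZMod p) :=
  ZMod.ringHom_surjective _

instance isMaximal_ker_toZMod (p : Nat.Primes) : (RingHom.ker (toZMod p)).IsMaximal :=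
  RingHom.ker_isMaximal_of_surjective _ (toZMod_surjective p)

theorem ker_toZMod_injective : Function.Injective fun p => RingHom.ker (toZMod p) := by
  intro p q hpq
  have hmem : (p : Zhat) ∈ RingHom.ker (toZMod q) := by
    have hp : (p : Zhat) ∈ RingHom.ker (toZMod p) := by simp [RingHom.mem_ker]
    exact hpq.le hp
  have hdvd : (q : ℕ) ∣ p := by
    rwa [RingHom.mem_ker, map_natCast, ZMod.natCast_eq_zero_iff] at hmem
  exact Subtype.ext ((Nat.prime_dvd_prime_iff_eq q.2 p.2).1 hdvd).symm

theorem isOpen_ker_toZMod (p : Nat.Primes) : IsOpen (RingHom.ker (toZMod p) : Set Zhat) := by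
  have hker : (RingHom.ker (toZMod p) : Set Zhat) = {x | ‖x p‖ < 1} := by
    ext x
    rw [Set.mem_ofPred_eq, ← PadicInt.mem_nonunits, ← IsLocalRing.mem_maximalIdeal,
      ← PadicInt.ker_toZMod]
    rfl
  exact hker ▸ isOpen_lt (continuous_apply p).norm continuous_const

theorem card_quotient_ker_toZMod (p : Nat.Primes) :
    Nat.card (Zhat ⧸ RingHom.ker (toZMod p)) = p := by
  rw [Nat.card_congr (RingHom.quotientKerEquivOfSurjective (toZMod_surjective p)).toEquiv,
    Nat.card_zmod]

theorem tsum_inv_card_quotient_ker_toZMod :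
    ∑' p, (Nat.card (Zhat ⧸ RingHom.ker (toZMod p)) : ℝ≥0∞)⁻¹ = ∞ := by
  simp only [card_quotient_ker_toZMod]
  by_contra h
  refine Nat.Primes.not_summable_one_div ?_
  simpa using ENNReal.summable_toReal h

end Zhat

theorem stmt4 (μ : Measure Zhat) [IsProbabilityMeasure μ] [μ.IsAddHaarMeasure] :
    Tendsto (fun n : ℕ =>
        ((Measure.pi fun _ : Fin n => Measure.pi fun _ : Fin n => μ)
          {A | Function.Surjective (Matrix.of A).mulVecLin}).toReal) atTop
      (nhds 0) := by
  refine (tendsto_add_atTop_iff_nat 1).1 ?_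
  simp [stmt4_general μ Zhat.ker_toZMod_injective Zhat.isOpen_ker_toZMod
    Zhat.tsum_inv_card_quotient_ker_toZMod]
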